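/- For every λ-term M the following are equivalent: (i) there exists a ∈ T_r(M) with NF(a) ≠ 0; (ii) there exist a ∈ T_r(M) and m ∈ ℕ such that H_r^m(a) is a head-normal form different from 0; (iii) there exists m ∈ ℕ such that H^m(M) is a head-normal form; (iv) M is head-normalizable. -/

import Mathlib

/-! Ordinary λ-terms, in de Bruijn notation. -/
inductive Lam : Type
  | var : ℕ → Lam
  | lam : Lam → Lam
  | app : Lam → Lam → Lam
  deriving DecidableEq

namespace Lam

/-- Shift the free indices `≥ d` up by one. -/
def lift (d : ℕ) : Lam → Lam
  | var n => if n < d then var n else var (n + 1)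
  | lam M => lam (lift (d + 1) M)
  | app P Q => app (lift d P) (lift d Q)

/-- Capture-avoiding substitution of `N` for the free variable `k`. -/
def subst : Lam → ℕ → Lam → Lam
  | var n, k, N => if n = k then N else if k < n then var (n - 1) else var n
  | lam M, k, N => lam (subst M (k + 1) (lift 0 N))
  | app P Q, k, N => app (subst P k N) (subst Q k N)

/-- Number of free occurrences of the variable `k`. -/
def count (k : ℕ) : Lam → ℕ
  | var n => if n = k then 1 else 0
  | lam M => count (k + 1) M
  | app P Q => count k P + count k Q

/-- One-step β-reduction. -/
inductive Beta : Lam → Lam → Prop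
  | beta (M N : Lam) : Beta (app (lam M) N) (subst M 0 N)
  | lam {M M'} : Beta M M' → Beta (lam M) (lam M')
  | appL {P P' Q} : Beta P P' → Beta (app P Q) (app P' Q)
  | appR {P Q Q'} : Beta Q Q' → Beta (app P Q) (app P Q')

/-- The head of the application spine is a variable, with no λ on the spine. -/
def neutral : Lam → Bool
  | var _ => true
  | lam _ => false
  | app P _ => neutral P

/-- Head-normal forms: `λx₁…λxₘ. x N₁ … Nₙ`. -/
def isHNF : Lam → Prop
  | var _ => True
  | lam M => isHNF M
  | app P _ => neutral P = true

/-- The head-reduction function `H`: contracts the head redex, identity on head-normal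
forms. -/
def H : Lam → Lam
  | var n => var n
  | lam M => lam (H M)
  | app (lam P) Q => subst P 0 Q
  | app (var n) Q => app (var n) Q
  | app (app P₁ P₂) Q => app (H (app P₁ P₂)) Q

/-- The left-parallel reduction function `L`: identity on β-normal forms, propagated to
the arguments on head-normal forms, contraction of the head redex otherwise. -/
def L : Lam → Lam
  | var n => var n
  | lam M => lam (L M)
  | app (lam P) Q => subst P 0 Q
  | app (var n) Q => app (var n) (L Q)
  | app (app P₁ P₂) Q =>
      if neutral (app P₁ P₂) then app (L (app P₁ P₂)) (L Q)
      else app (L (app P₁ P₂)) Q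

/-- Iterated application `M N₁ … Nₙ`. -/
def mkApps (M : Lam) (Ns : List Lam) : Lam := Ns.foldl app M

/-- All free variables are `< d`. -/
def ClosedAt (d : ℕ) : Lam → Prop
  | var n => n < d
  | lam M => ClosedAt (d + 1) M
  | app P Q => ClosedAt d P ∧ ClosedAt d Q

/-- `M` is head-normalizable: it β-reduces in finitely many steps to a head-normal form. -/
def HeadNormalizable (M : Lam) : Prop :=
  ∃ N, Relation.ReflTransGen Beta M N ∧ isHNF N

/-- `M` is a β-normal form: it contains no β-redex, i.e. admits no β-step. -/
def BetaNF (M : Lam) : Prop := ¬∃ N, Beta M N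

/-- `M` is β-normalizable: it β-reduces in finitely many steps to a β-normal form. -/
def BetaNormalizable (M : Lam) : Prop :=
  ∃ N, Relation.ReflTransGen Beta M N ∧ BetaNF N

/-- `M` is strongly β-normalizable: no infinite β-reduction sequence starts from `M`. -/
def StronglyNormalizable (M : Lam) : Prop := Acc (fun N M' => Beta M' N) M

end Lam

/-! Rigid resource terms (the nonzero ones), in de Bruijn notation:
`a ::= x | λx.a | ⟨c⟩d⃗` with `d⃗` a list of rigid terms.
The term `0` is represented by `none : Option Rig`. -/
inductive Rig : Type
  | var : ℕ → Rig
  | lam : Rig → Rig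
  | app : Rig → List Rig → Rig

namespace Rig

mutual
/-- Number of free occurrences of the variable `k` in a rigid term. -/
def countR (k : ℕ) : Rig → ℕ
  | var n => if n = k then 1 else 0
  | lam a => countR (k + 1) a
  | app c ds => countR k c + countRList k ds
termination_by a => sizeOf a

def countRList (k : ℕ) : List Rig → ℕ
  | [] => 0
  | d :: ds => countR k d + countRList k ds
termination_by ds => sizeOf ds
end

mutual
/-- Shift the free indices `≥ d` up by one. -/
def liftR (d : ℕ) : Rig → Rig
  | var n => if n < d then var n else var (n + 1)
  | lam a => lam (liftR (d + 1) a)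
  | app c ds => app (liftR d c) (liftRList d ds)
termination_by a => sizeOf a

def liftRList (d : ℕ) : List Rig → List Rig
  | [] => []
  | a :: as => liftR d a :: liftRList d as
termination_by as => sizeOf as
end

mutual
/-- Rigid substitution `a[b⃗/k]`: the list `b⃗` is distributed, in order, over the
free occurrences of the variable `k`; the result is `none` (i.e. `0`) when
`|b⃗| ≠ n_k(a)`. -/
def rsubst (k : ℕ) : Rig → List Rig → Option Rig
  | var n, bs =>
      if n = k then (match bs with | [b] => some b | _ => none)
      else (match bs with
            | [] => some (if k < n then var (n - 1) else var n)
            | _ => none)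
  | lam a, bs => (rsubst (k + 1) a (liftRList 0 bs)).map lam
  | app c ds, bs =>
      match rsubst k c (bs.take (countR k c)), rsubstList k ds (bs.drop (countR k c)) with
      | some c', some ds' => some (app c' ds')
      | _, _ => none
termination_by a _ => sizeOf a

def rsubstList (k : ℕ) : List Rig → List Rig → Option (List Rig)
  | [], bs => if bs.isEmpty then some [] else none
  | d :: ds, bs =>
      match rsubst k d (bs.take (countR k d)), rsubstList k ds (bs.drop (countR k d)) with
      | some d', some ds' => some (d' :: ds')
      | _, _ => none
termination_by ds _ => sizeOf ds
end

/-- One-step rigid resource reduction `→_r` (contextual closure of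
`⟨λx.a⟩b⃗ →_r a[b⃗/x]`); the result may be `0` (i.e. `none`), which annihilates
the surrounding context. -/
inductive RStep : Rig → Option Rig → Prop
  | beta (a : Rig) (bs : List Rig) : RStep (app (lam a) bs) (rsubst 0 a bs)
  | lam {a r} : RStep a r → RStep (lam a) (r.map lam)
  | head {c r} (ds : List Rig) : RStep c r → RStep (app c ds) (r.map (fun c' => app c' ds))
  | arg {d r} (c : Rig) (ds₁ ds₂ : List Rig) :
      RStep d r → RStep (app c (ds₁ ++ d :: ds₂)) (r.map (fun d' => app c (ds₁ ++ d' :: ds₂)))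

/-- `→_r` on rigid terms extended with `0`; `0` is inert. -/
inductive RStepO : Option Rig → Option Rig → Prop
  | mk {a r} : RStep a r → RStepO (some a) r

/-- `r` is a `→_r`-normal form (`0` is one). -/
def RNormal (r : Option Rig) : Prop := ¬∃ r', RStepO r r'

/-- The head of the application spine is a variable, with no λ on the spine. -/
def rNeutral : Rig → Bool
  | var _ => true
  | lam _ => false
  | app c _ => rNeutral c

/-- Rigid head-normal forms among nonzero terms: `λx₁…λxₘ.⟨…⟨x⟩d⃗₁…⟩d⃗ₙ`
(the term `0` is a head-normal form, but it is treated separately). -/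
def rIsHNF : Rig → Prop
  | var _ => True
  | lam a => rIsHNF a
  | app c _ => rNeutral c = true

/-- The rigid head-reduction function `H_r`: contracts the head redex, identity on
head-normal forms; the result may be `0` (i.e. `none`). -/
def Hr : Rig → Option Rig
  | var n => some (var n)
  | lam a => (Hr a).map lam
  | app (lam a) bs => rsubst 0 a bs
  | app (var n) ds => some (app (var n) ds)
  | app (app c₁ c₂) ds => (Hr (app c₁ c₂)).map (fun c' => app c' ds)

/-- `H_r` extended to terms-or-`0`. -/
def HrO : Option Rig → Option Rig := fun r => r.bind Hr

mutual
/-- The rigid left-parallel reduction function `L_r`: identity on `→_r`-normal forms,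
applied componentwise to the argument lists on head-normal forms, contraction of the
head redex otherwise; the result may be `0` (i.e. `none`). -/
def Lr : Rig → Option Rig
  | var n => some (var n)
  | lam a => (Lr a).map lam
  | app (lam a) bs => rsubst 0 a bs
  | app (var n) ds => (LrList ds).map (fun ds' => app (var n) ds')
  | app (app c₁ c₂) ds =>
      if rNeutral (app c₁ c₂) then
        match Lr (app c₁ c₂), LrList ds with
        | some c', some ds' => some (app c' ds')
        | _, _ => none
      else (Lr (app c₁ c₂)).map (fun c' => app c' ds)
termination_by a => sizeOf a

def LrList : List Rig → Option (List Rig)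
  | [] => some []
  | d :: ds =>
      match Lr d, LrList ds with
      | some d', some ds' => some (d' :: ds')
      | _, _ => none
termination_by ds => sizeOf ds
end

/-- `L_r` extended to terms-or-`0`. -/
def LrO : Option Rig → Option Rig := fun r => r.bind Lr

/-- Positive resource terms: no empty list/multiset occurs as the argument of an
application. -/
inductive rPositive : Rig → Prop
  | var (n : ℕ) : rPositive (var n)
  | lam {a} : rPositive a → rPositive (lam a)
  | app {c : Rig} {ds : List Rig} :
      rPositive c → ds ≠ [] → (∀ d ∈ ds, rPositive d) → rPositive (app c ds)

end Rig

/-- The rigid expansion `T_r(M)` of a λ-term (equivalently, the support of its Taylor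
expansion, with multisets presented by lists: `Texp M` is closed under permutation of
argument lists). -/
def Texp : Lam → Set Rig
  | Lam.var n => {Rig.var n}
  | Lam.lam M => {a | ∃ b ∈ Texp M, a = Rig.lam b}
  | Lam.app P Q => {a | ∃ c ∈ Texp P, ∃ ds : List Rig, (∀ d ∈ ds, d ∈ Texp Q) ∧ a = Rig.app c ds}

namespace Rig

/-- The support of the `n`-linear substitution `∂_k a · b̄`, where the multiset `b̄` is
presented by the list `bs`: the finite formal sum (multiset) of all nonzero results of
rigid substitutions along bijective assignments, i.e. permutations of `bs`. -/
def permSubst (k : ℕ) (a : Rig) (bs : List Rig) : Multiset Rig :=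
  ↑(bs.permutations.filterMap (fun bs' => rsubst k a bs'))

/-- One step of non-erasing ε-resource reduction `→^{¬e}_{∂ε}` out of a single resource
term, producing a finite formal sum (a multiset) of resource terms: non-erasing resource
β-steps `⟨λx.a⟩b̄ → ∂_x a · b̄` (with `x ∈ FV(a)`) and resource σ₁-steps, under any
context. -/
inductive NEStep : Rig → Multiset Rig → Prop
  | beta {a : Rig} (bs : List Rig) :
      0 < countR 0 a → NEStep (app (lam a) bs) (permSubst 0 a bs)
  | sigma (a : Rig) (ts qs : List Rig) :
      NEStep (app (app (lam a) ts) qs) {app (lam (app a (liftRList 0 qs))) ts}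
  | lam {a σ} : NEStep a σ → NEStep (lam a) (σ.map lam)
  | head {c σ} (ds : List Rig) : NEStep c σ → NEStep (app c ds) (σ.map (fun c' => app c' ds))
  | arg {d σ} (c : Rig) (ds₁ ds₂ : List Rig) :
      NEStep d σ → NEStep (app c (ds₁ ++ d :: ds₂)) (σ.map (fun d' => app c (ds₁ ++ d' :: ds₂)))

/-- Non-erasing ε-resource reduction on finite formal sums, extended by linearity. -/
def NEStepSum (σ τ : Multiset Rig) : Prop :=
  ∃ (a : Rig) (ρ υ : Multiset Rig), σ = a ::ₘ ρ ∧ NEStep a υ ∧ τ = υ + ρ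

/-- `σ` is a `→^{¬e}_{∂ε}`-normal form. -/
def NENormal (σ : Multiset Rig) : Prop := ¬∃ τ, NEStepSum σ τ

end Rig

/-- One step of non-erasing ε-reduction on λ-terms: non-erasing β-steps
`(λx.M)N → M[N/x]` (with `x ∈ FV(M)`) together with σ₁-steps
`((λx.M)N)P → (λx.MP)N` (`x ∉ FV(P)`), under any context. -/
inductive NEeps : Lam → Lam → Prop
  | beta {M : Lam} (N : Lam) :
      0 < Lam.count 0 M → NEeps (Lam.app (Lam.lam M) N) (Lam.subst M 0 N)
  | sigma (M N P : Lam) :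
      NEeps (Lam.app (Lam.app (Lam.lam M) N) P)
        (Lam.app (Lam.lam (Lam.app M (Lam.lift 0 P))) N)
  | lam {M M'} : NEeps M M' → NEeps (Lam.lam M) (Lam.lam M')
  | appL {P P' Q} : NEeps P P' → NEeps (Lam.app P Q) (Lam.app P' Q)
  | appR {P Q Q'} : NEeps Q Q' → NEeps (Lam.app P Q) (Lam.app P Q')

/-- The set `S` of λ-terms. -/
inductive SLam : Lam → Prop
  | varApp (n : ℕ) (Ms : List Lam) :
      (∀ M ∈ Ms, SLam M) → SLam (Lam.mkApps (Lam.var n) Ms)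
  | lam {M} : SLam M → SLam (Lam.lam M)
  | redex (M₀ M₁ : Lam) (Ms : List Lam) :
      SLam M₁ → SLam (Lam.mkApps (Lam.subst M₀ 0 M₁) Ms) →
      SLam (Lam.mkApps (Lam.app (Lam.lam M₀) M₁) Ms)

/-- λI-terms: every abstraction binds a variable occurring free in its body. -/
def LamI : Lam → Prop
  | Lam.var _ => True
  | Lam.lam M => LamI M ∧ 0 < Lam.count 0 M
  | Lam.app P Q => LamI P ∧ LamI Q

/-!
A reduct of `a ∈ Texp M` need not lie in the expansion of a reduct of `M`: the copies of an argument
reduce independently of each other. It does, however, remain in the larger set of approximants of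
`M`, where every node of the expansion may be reached after some weak head reduction of the
corresponding subterm. This set is stable under `→_r`, and an approximant in head-normal form forces
the head reduction of `M` to stop. Conversely, β-steps and head steps pull back along the expansion:
each element of the expansion of the reduct is reached from the expansion of the source.
-/

open Relation

namespace Lam

theorem lift_lift {i k : ℕ} (h : i ≤ k) (M : Lam) :
    lift (k + 1) (lift i M) = lift i (lift k M) := by
  induction M generalizing i k with
  | var n => grind [lift]
  | lam M ih => simp only [lift, ih (Nat.succ_le_succ h)]
  | app P Q ihP ihQ => simp only [lift, ihP h, ihQ h]

theorem lift_subst_of_le {i k : ℕ} (h : i ≤ k) (M N : Lam) :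
    lift k (subst M i N) = subst (lift (k + 1) M) i (lift k N) := by
  induction M generalizing i k N with
  | var n => grind [lift, subst]
  | lam M ih => simp only [lift, subst, ih (Nat.succ_le_succ h), lift_lift (Nat.zero_le k)]
  | app P Q ihP ihQ => simp only [lift, subst, ihP h, ihQ h]

theorem lift_subst_of_ge {i k : ℕ} (h : i ≤ k) (M N : Lam) :
    lift i (subst M k N) = subst (lift i M) (k + 1) (lift i N) := by
  induction M generalizing i k N with
  | var n => grind [lift, subst]
  | lam M ih => simp only [lift, subst, ih (Nat.succ_le_succ h), lift_lift (Nat.zero_le i)]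
  | app P Q ihP ihQ => simp only [lift, subst, ihP h, ihQ h]

theorem subst_lift (k : ℕ) (M N : Lam) : subst (lift k M) k N = M := by
  induction M generalizing k N with
  | var n => grind [lift, subst]
  | lam M ih => simp only [lift, subst, ih]
  | app P Q ihP ihQ => simp only [lift, subst, ihP, ihQ]

theorem subst_subst {i k : ℕ} (h : i ≤ k) (M P N : Lam) :
    subst (subst M i P) k N = subst (subst M (k + 1) (lift i N)) i (subst P k N) := by
  induction M generalizing i k P N with
  | var n => grind [subst, subst_lift]
  | lam M ih =>
    simp only [subst, ih (Nat.succ_le_succ h), lift_lift (Nat.zero_le i),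
      lift_subst_of_ge (Nat.zero_le k)]
  | app Q R ihQ ihR => simp only [subst, ihQ h, ihR h]

/-- Weak head reduction: contraction of the head redex of a term that is not an abstraction. -/
inductive WeakHead : Lam → Lam → Prop
  | beta (P Q : Lam) : WeakHead (app (lam P) Q) (subst P 0 Q)
  | app {P P'} (Q : Lam) : WeakHead P P' → WeakHead (app P Q) (app P' Q)

theorem WeakHead.H_eq {M M' : Lam} (h : WeakHead M M') : H M = M' := by
  induction h with
  | beta P Q => rfl
  | app Q h ih => cases h <;> exact congrArg (Lam.app · Q) ih

theorem WeakHead.lift {M M' : Lam} (h : WeakHead M M') (k : ℕ) :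
    WeakHead (M.lift k) (M'.lift k) := by
  induction h with
  | beta P Q =>
    rw [lift_subst_of_le (Nat.zero_le k)]
    exact .beta _ _
  | app Q _ ih => exact .app _ ih

theorem WeakHead.subst {M M' : Lam} (h : WeakHead M M') (k : ℕ) (N : Lam) :
    WeakHead (M.subst k N) (M'.subst k N) := by
  induction h with
  | beta P Q =>
    rw [subst_subst (Nat.zero_le k)]
    exact .beta _ _
  | app Q _ ih => exact .app _ ih

theorem exists_iterate_H_eq_of_weakHead {M M' : Lam} (h : ReflTransGen WeakHead M M') :
    ∃ m, H^[m] M = M' := by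
  induction h using ReflTransGen.head_induction_on with
  | refl => exact ⟨0, rfl⟩
  | head h _ ih =>
    obtain ⟨m, hm⟩ := ih
    exact ⟨m + 1, by rw [Function.iterate_succ_apply, h.H_eq, hm]⟩

theorem iterate_H_lam (m : ℕ) (M : Lam) : H^[m] (lam M) = lam (H^[m] M) :=
  (Function.Semiconj.iterate_right (f := lam) (ga := H) (gb := H) (fun _ => rfl) m M).symm

theorem isHNF_of_neutral {M : Lam} (h : neutral M = true) : isHNF M := by
  cases M with
  | var n => trivial
  | lam M => cases h
  | app P Q => exact h

theorem beta_H (M : Lam) : ReflTransGen Beta M (H M) := by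
  fun_induction H M with
  | case1 | case4 => exact .refl
  | case2 M ih => exact ih.lift lam fun _ _ => .lam
  | case3 P Q => exact .single (.beta P Q)
  | case5 P₁ P₂ Q ih => exact ih.lift (app · Q) fun _ _ => .appL

theorem beta_iterate_H (m : ℕ) (M : Lam) : ReflTransGen Beta M (H^[m] M) := by
  induction m generalizing M with
  | zero => exact .refl
  | succ m ih => exact (beta_H M).trans (ih (H M))

end Lam

namespace Rig

theorem liftRList_eq_map (k : ℕ) (as : List Rig) : liftRList k as = as.map (liftR k) := by
  induction as with
  | nil => rw [liftRList, List.map_nil]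
  | cons a as ih => rw [liftRList, ih, List.map_cons]

theorem rsubst_var_eq_some_iff {k n : ℕ} {bs : List Rig} {r : Rig} :
    rsubst k (var n) bs = some r ↔ n = k ∧ bs = [r] ∨
      n ≠ k ∧ bs = [] ∧ (if k < n then var (n - 1) else var n) = r := by
  by_cases hn : n = k <;> rcases bs with _ | ⟨b, _ | ⟨c, bs⟩⟩ <;> simp [rsubst, hn]

theorem rsubst_app_eq_some_iff {k : ℕ} {c r : Rig} {ds bs : List Rig} :
    rsubst k (app c ds) bs = some r ↔ ∃ c' ds', rsubst k c (bs.take (countR k c)) = some c' ∧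
      rsubstList k ds (bs.drop (countR k c)) = some ds' ∧ app c' ds' = r := by
  rw [rsubst]
  split <;> simp_all

theorem rsubstList_cons_eq_some_iff {k : ℕ} {d : Rig} {ds bs rs : List Rig} :
    rsubstList k (d :: ds) bs = some rs ↔ ∃ d' ds', rsubst k d (bs.take (countR k d)) = some d' ∧
      rsubstList k ds (bs.drop (countR k d)) = some ds' ∧ d' :: ds' = rs := by
  rw [rsubstList]
  split <;> simp_all

theorem exists_rsubst_eq_of_mem_rsubstList {k : ℕ} {ds bs rs : List Rig}
    (h : rsubstList k ds bs = some rs) {r : Rig} (hr : r ∈ rs) :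
    ∃ d ∈ ds, ∃ bs' ⊆ bs, rsubst k d bs' = some r := by
  induction ds generalizing bs rs with
  | nil =>
    rw [rsubstList] at h
    split_ifs at h
    cases h
    cases hr
  | cons d ds ih =>
    obtain ⟨d', ds', hd, hds, rfl⟩ := rsubstList_cons_eq_some_iff.1 h
    rcases List.mem_cons.1 hr with rfl | hr
    · exact ⟨d, List.mem_cons_self, _, List.take_subset _ _, hd⟩
    · obtain ⟨e, he, bs', hbs, hsub⟩ := ih hds hr
      exact ⟨e, List.mem_cons_of_mem d he, bs', fun b hb => List.mem_of_mem_drop (hbs hb), hsub⟩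

theorem reflTransGen_rStepO_map {f : Rig → Rig} (hf : ∀ a r, RStep a r → RStep (f a) (r.map f))
    {r s : Option Rig} (h : ReflTransGen RStepO r s) :
    ReflTransGen RStepO (r.map f) (s.map f) :=
  h.lift (Option.map f) fun | _, _, .mk h => .mk (hf _ _ h)

theorem reflTransGen_rStepO_app_args (c : Rig) (cs : List Rig) {ds es : List Rig}
    (h : List.Forall₂ (fun d e => ReflTransGen RStepO (some d) (some e)) ds es) :
    ReflTransGen RStepO (some (app c (cs ++ ds))) (some (app c (cs ++ es))) := by
  induction h generalizing cs with
  | nil => exact .refl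
  | @cons d e ds es hd _ ih =>
    have first : ReflTransGen RStepO (some (app c (cs ++ d :: ds)))
        (some (app c (cs ++ e :: ds))) :=
      reflTransGen_rStepO_map (fun _ _ h => .arg c cs ds h) hd
    have rest := ih (cs ++ [e])
    simp only [List.append_assoc, List.singleton_append] at rest
    exact first.trans rest

theorem reflTransGen_rStepO_Hr (a : Rig) : ReflTransGen RStepO (some a) (Hr a) := by
  fun_induction Hr a with
  | case1 | case4 => exact .refl
  | case2 a ih => exact reflTransGen_rStepO_map (fun _ _ => .lam) ih
  | case3 a bs => exact .single (.mk (.beta a bs))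
  | case5 c₁ c₂ ds ih => exact reflTransGen_rStepO_map (fun _ _ h => .head ds h) ih

theorem reflTransGen_rStepO_iterate_HrO (m : ℕ) (r : Option Rig) :
    ReflTransGen RStepO r (HrO^[m] r) := by
  induction m generalizing r with
  | zero => exact .refl
  | succ m ih =>
    refine ReflTransGen.trans ?_ (ih (HrO r))
    cases r with
    | none => exact .refl
    | some a => exact reflTransGen_rStepO_Hr a

theorem rNormal_some_iff {a : Rig} : RNormal (some a) ↔ ∀ r, ¬ RStep a r :=
  ⟨fun h r hr => h ⟨r, .mk hr⟩, fun h ⟨r, .mk hr⟩ => h r hr⟩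

theorem rIsHNF_of_rNormal {a : Rig} (h : RNormal (some a)) : rIsHNF a := by
  rw [rNormal_some_iff] at h
  induction a using Hr.induct with
  | case1 | case4 => trivial
  | case2 a ih => exact ih fun r hr => h _ (.lam hr)
  | case3 a bs => exact absurd (.beta a bs) (h _)
  | case5 c₁ c₂ ds ih => exact ih fun r hr => h _ (.head ds hr)

theorem rNormal_var (n : ℕ) : RNormal (some (var n)) :=
  rNormal_some_iff.2 fun _ h => nomatch h

theorem RNormal.lam {a : Rig} (h : RNormal (some a)) : RNormal (some (lam a)) := by
  rw [rNormal_some_iff] at h ⊢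
  intro r hr
  cases hr with
  | lam ha => exact h _ ha

theorem RNormal.app_nil {c : Rig} (h : RNormal (some c)) (hc : rNeutral c = true) :
    RNormal (some (app c [])) := by
  rw [rNormal_some_iff] at h ⊢
  intro r hr
  generalize hx : app c [] = x at hr
  cases hr with
  | beta a bs =>
    cases hx
    cases hc
  | lam _ => cases hx
  | head ds hstep =>
    cases hx
    exact h _ hstep
  | arg c' ds₁ ds₂ _ => simp at hx

open Lam in
/-- `Approx a M`: the rigid term `a` arises like an element of `Texp M`, except that before reading
off each node the λ-term at hand may perform weak head reductions, separately for each copy of an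
argument. -/
inductive Approx : Rig → Lam → Prop
  | var {M n} : ReflTransGen WeakHead M (.var n) → Approx (var n) M
  | lam {M M' a} : ReflTransGen WeakHead M (.lam M') → Approx a M' → Approx (lam a) M
  | app {M P Q c ds} : ReflTransGen WeakHead M (.app P Q) → Approx c P →
      (∀ d ∈ ds, Approx d Q) → Approx (app c ds) M

namespace Approx

open Lam (WeakHead)

theorem of_mem_Texp {M : Lam} {a : Rig} (h : a ∈ Texp M) : Approx a M := by
  induction M generalizing a with
  | var n =>
    cases h
    exact .var .refl
  | lam M ih =>
    obtain ⟨b, hb, rfl⟩ := h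
    exact .lam .refl (ih hb)
  | app P Q ihP ihQ =>
    obtain ⟨c, hc, ds, hds, rfl⟩ := h
    exact .app .refl (ihP hc) fun d hd => ihQ (hds d hd)

theorem of_weakHead {M M' : Lam} {a : Rig} (hM : ReflTransGen WeakHead M M') (h : Approx a M') :
    Approx a M := by
  cases h with
  | var h => exact .var (hM.trans h)
  | lam h ha => exact .lam (hM.trans h) ha
  | app h hc hds => exact .app (hM.trans h) hc hds

theorem liftR {a : Rig} {M : Lam} (h : Approx a M) (k : ℕ) : Approx (liftR k a) (M.lift k) := by
  induction h generalizing k with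
  | @var M n h =>
    refine of_weakHead (h.lift _ fun _ _ h => h.lift k) ?_
    rw [Rig.liftR, Lam.lift]
    split_ifs <;> exact .var .refl
  | lam h _ ih =>
    rw [Rig.liftR]
    exact .lam (h.lift _ fun _ _ h => h.lift k) (ih (k + 1))
  | app h _ _ ihc ihds =>
    rw [Rig.liftR, liftRList_eq_map]
    exact .app (h.lift _ fun _ _ h => h.lift k) (ihc k)
      (List.forall_mem_map.2 fun d hd => ihds d hd k)

theorem rsubst_var {k n : ℕ} {bs : List Rig} {r : Rig} {N : Lam} (hbs : ∀ b ∈ bs, Approx b N)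
    (hr : rsubst k (.var n) bs = some r) : Approx r (Lam.subst (.var n) k N) := by
  rw [Lam.subst]
  rcases rsubst_var_eq_some_iff.1 hr with ⟨hn, rfl⟩ | ⟨hn, rfl, rfl⟩
  · rw [if_pos hn]
    exact hbs r List.mem_cons_self
  · rw [if_neg hn]
    split_ifs <;> exact .var .refl

theorem rsubst {a r : Rig} {M N : Lam} {k : ℕ} {bs : List Rig} (h : Approx a M)
    (hbs : ∀ b ∈ bs, Approx b N) (hr : rsubst k a bs = some r) : Approx r (M.subst k N) := by
  induction h generalizing k bs r N with
  | var h => exact of_weakHead (h.lift _ fun _ _ h => h.subst k N) (rsubst_var hbs hr)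
  | lam h _ ih =>
    rw [Rig.rsubst, Option.map_eq_some_iff] at hr
    obtain ⟨r', hr', rfl⟩ := hr
    refine .lam (h.lift _ fun _ _ h => h.subst k N) (ih ?_ hr')
    rw [liftRList_eq_map]
    exact List.forall_mem_map.2 fun b hb => (hbs b hb).liftR 0
  | app h _ _ ihc ihds =>
    obtain ⟨c', ds', hc', hds', rfl⟩ := rsubst_app_eq_some_iff.1 hr
    refine .app (h.lift _ fun _ _ h => h.subst k N)
      (ihc (fun b hb => hbs b (List.mem_of_mem_take hb)) hc') fun d' hd' => ?_
    obtain ⟨d, hd, bs', hbs', hsub⟩ := exists_rsubst_eq_of_mem_rsubstList hds' hd'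
    exact ihds d hd (fun b hb => hbs b (List.mem_of_mem_drop (hbs' hb))) hsub

theorem rStep {a : Rig} {r : Option Rig} {M : Lam} (h : Approx a M) (hr : RStep a r) :
    ∀ b ∈ r, Approx b M := by
  induction hr generalizing M with
  | beta a bs =>
    intro b hb
    cases h with
    | @app _ P Q _ _ hM hlam hbs =>
      cases hlam with
      | @lam _ P' _ hP ha =>
        have hredex : ReflTransGen WeakHead M (.app (.lam P') Q) :=
          hM.trans (hP.lift (Lam.app · Q) fun _ _ => .app Q)
        exact of_weakHead (hredex.tail (.beta P' Q)) (ha.rsubst hbs hb)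
  | lam _ ih =>
    cases h with
    | lam hM ha => exact Option.forall_mem_map.2 fun b hb => .lam hM (ih ha b hb)
  | head ds _ ih =>
    cases h with
    | app hM hc hds => exact Option.forall_mem_map.2 fun c' hc' => .app hM (ih hc c' hc') hds
  | arg c ds₁ ds₂ _ ih =>
    cases h with
    | app hM hc hds =>
      rw [List.forall_mem_append, List.forall_mem_cons] at hds
      refine Option.forall_mem_map.2 fun d' hd' => .app hM hc ?_
      rw [List.forall_mem_append, List.forall_mem_cons]
      exact ⟨hds.1, ih hds.2.1 d' hd', hds.2.2⟩

theorem reflTransGen_rStepO {a b : Rig} {M : Lam} (h : Approx a M)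
    (hab : ReflTransGen RStepO (some a) (some b)) : Approx b M := by
  suffices ∀ r, ReflTransGen RStepO (some a) r → ∀ b ∈ r, Approx b M from this _ hab b rfl
  intro r hr
  induction hr with
  | refl => rintro _ ⟨⟩; exact h
  | tail _ hstep ih =>
    obtain ⟨hstep⟩ := hstep
    exact (ih _ rfl).rStep hstep

theorem exists_neutral {a : Rig} {M : Lam} (h : Approx a M) (ha : rNeutral a = true) :
    ∃ M', ReflTransGen WeakHead M M' ∧ Lam.neutral M' = true := by
  induction h with
  | var hM => exact ⟨_, hM, rfl⟩
  | lam => cases ha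
  | @app M P Q c ds hM _ _ ih =>
    obtain ⟨P', hP, hneutral⟩ := ih ha
    exact ⟨.app P' Q, hM.trans (hP.lift (Lam.app · Q) fun _ _ => .app Q), hneutral⟩

theorem exists_isHNF_iterate_H {a : Rig} {M : Lam} (h : Approx a M) (ha : rIsHNF a) :
    ∃ m : ℕ, Lam.isHNF (Lam.H^[m] M) := by
  induction h with
  | var hM =>
    obtain ⟨m, hm⟩ := Lam.exists_iterate_H_eq_of_weakHead hM
    exact ⟨m, hm ▸ trivial⟩
  | lam hM _ ih =>
    obtain ⟨m, hm⟩ := Lam.exists_iterate_H_eq_of_weakHead hM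
    obtain ⟨l, hl⟩ := ih ha
    exact ⟨l + m, by rwa [Function.iterate_add_apply, hm, Lam.iterate_H_lam]⟩
  | app hM hc hds =>
    obtain ⟨M', hM', hneutral⟩ := (Approx.app hM hc hds).exists_neutral ha
    obtain ⟨m, hm⟩ := Lam.exists_iterate_H_eq_of_weakHead hM'
    exact ⟨m, hm ▸ Lam.isHNF_of_neutral hneutral⟩

end Approx

end Rig

section Expansion

open Lam Rig

theorem exists_map_eq_of_forall_mem_image {α β : Type*} {f : α → β} {s : Set α} {l : List β}
    (h : ∀ b ∈ l, b ∈ f '' s) : ∃ l' : List α, (∀ a ∈ l', a ∈ s) ∧ l'.map f = l := by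
  rw [Set.image_eq_range] at h
  obtain ⟨l', rfl⟩ : l ∈ Set.range (List.map fun a : s => f a) := by rwa [Set.range_list_map]
  exact ⟨l'.map Subtype.val, List.forall_mem_map.2 fun a _ => a.2, List.map_map⟩

theorem Texp_lift_subset (k : ℕ) (M : Lam) : Texp (M.lift k) ⊆ liftR k '' Texp M := by
  induction M generalizing k with
  | var n =>
    intro b hb
    refine ⟨.var n, rfl, ?_⟩
    rw [liftR]
    rw [Lam.lift] at hb
    split_ifs at hb ⊢ <;> exact hb.symm
  | lam M ih =>
    rintro _ ⟨b, hb, rfl⟩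
    obtain ⟨a, ha, rfl⟩ := ih (k + 1) hb
    exact ⟨.lam a, ⟨a, ha, rfl⟩, by rw [liftR]⟩
  | app P Q ihP ihQ =>
    rintro _ ⟨c, hc, ds, hds, rfl⟩
    obtain ⟨a, ha, rfl⟩ := ihP k hc
    obtain ⟨es, hes, rfl⟩ := exists_map_eq_of_forall_mem_image fun d hd => ihQ k (hds d hd)
    exact ⟨.app a es, ⟨a, ha, es, hes, rfl⟩, by rw [liftR, liftRList_eq_map]⟩

/-- The rigid terms `a[b⃗/k]` with `a ∈ A` and `b⃗` a list of elements of `B` of length `n_k(a)`: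
the substitution of a set of rigid terms in another. -/
def rsubstSet (k : ℕ) (A B : Set Rig) : Set Rig :=
  {r | ∃ a ∈ A, ∃ bs : List Rig, (∀ b ∈ bs, b ∈ B) ∧ bs.length = countR k a ∧
    rsubst k a bs = some r}

theorem exists_rsubstList_of_forall_mem_rsubstSet {k : ℕ} {A B : Set Rig} {rs : List Rig}
    (h : ∀ r ∈ rs, r ∈ rsubstSet k A B) :
    ∃ as : List Rig, (∀ a ∈ as, a ∈ A) ∧ ∃ bs : List Rig, (∀ b ∈ bs, b ∈ B) ∧
      bs.length = countRList k as ∧ rsubstList k as bs = some rs := by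
  induction rs with
  | nil => exact ⟨[], by simp, [], by simp, by simp [countRList], by simp [rsubstList]⟩
  | cons r rs ih =>
    rw [List.forall_mem_cons] at h
    obtain ⟨a, ha, bs, hbs, hlen, hr⟩ := h.1
    obtain ⟨as, has, cs, hcs, hlens, hrs⟩ := ih h.2
    refine ⟨a :: as, List.forall_mem_cons.2 ⟨ha, has⟩, bs ++ cs,
      List.forall_mem_append.2 ⟨hbs, hcs⟩, ?_, rsubstList_cons_eq_some_iff.2 ⟨r, rs, ?_, ?_, rfl⟩⟩
    · rw [List.length_append, countRList, hlen, hlens]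
    · rwa [← hlen, List.take_left]
    · rwa [← hlen, List.drop_left]

theorem Texp_subst_subset (k : ℕ) (M N : Lam) :
    Texp (M.subst k N) ⊆ rsubstSet k (Texp M) (Texp N) := by
  induction M generalizing k N with
  | var n =>
    intro r hr
    refine ⟨.var n, rfl, ?_⟩
    rw [Lam.subst] at hr
    simp only [countR, rsubst_var_eq_some_iff]
    by_cases hn : n = k
    · rw [if_pos hn] at hr
      exact ⟨[r], List.forall_mem_singleton.2 hr, (if_pos hn).symm, .inl ⟨hn, rfl⟩⟩
    · rw [if_neg hn] at hr
      refine ⟨[], List.forall_mem_nil _, (if_neg hn).symm, .inr ⟨hn, rfl, ?_⟩⟩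
      split_ifs at hr ⊢ <;> exact hr.symm
  | lam M ih =>
    rintro _ ⟨r, hr, rfl⟩
    obtain ⟨a, ha, bs', hbs', hlen, hsub⟩ := ih (k + 1) (N.lift 0) hr
    obtain ⟨bs, hbs, rfl⟩ :=
      exists_map_eq_of_forall_mem_image fun b hb => Texp_lift_subset 0 N (hbs' b hb)
    refine ⟨.lam a, ⟨a, ha, rfl⟩, bs, hbs, ?_, ?_⟩
    · rw [countR, ← hlen, List.length_map]
    · rw [rsubst, liftRList_eq_map, hsub, Option.map_some]
  | app P Q ihP ihQ =>
    rintro _ ⟨c', hc', ds', hds', rfl⟩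
    obtain ⟨c, hc, bs, hbs, hlen, hsub⟩ := ihP k N hc'
    obtain ⟨ds, hds, cs, hcs, hlens, hsubs⟩ :=
      exists_rsubstList_of_forall_mem_rsubstSet fun d hd => ihQ k N (hds' d hd)
    refine ⟨.app c ds, ⟨c, hc, ds, hds, rfl⟩, bs ++ cs, List.forall_mem_append.2 ⟨hbs, hcs⟩, ?_,
      rsubst_app_eq_some_iff.2 ⟨c', ds', ?_, ?_, rfl⟩⟩
    · rw [List.length_append, countR, hlen, hlens]
    · rwa [← hlen, List.take_left]
    · rwa [← hlen, List.drop_left]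

theorem exists_Hr_eq_of_mem_Texp_H {M : Lam} {b : Rig} (hb : b ∈ Texp (H M)) :
    ∃ a ∈ Texp M, Hr a = some b := by
  fun_induction H M generalizing b with
  | case1 n =>
    cases hb
    exact ⟨.var n, rfl, rfl⟩
  | case2 M ih =>
    obtain ⟨b, hb, rfl⟩ := hb
    obtain ⟨a, ha, hab⟩ := ih hb
    exact ⟨.lam a, ⟨a, ha, rfl⟩, by rw [Hr, hab, Option.map_some]⟩
  | case3 P Q =>
    obtain ⟨a, ha, bs, hbs, -, hsub⟩ := Texp_subst_subset 0 P Q hb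
    exact ⟨.app (.lam a) bs, ⟨.lam a, ⟨a, ha, rfl⟩, bs, hbs, rfl⟩, hsub⟩
  | case4 n Q =>
    refine ⟨b, hb, ?_⟩
    obtain ⟨_, rfl, ds, -, rfl⟩ := hb
    rfl
  | case5 P₁ P₂ Q ih =>
    obtain ⟨c, hc, ds, hds, rfl⟩ := hb
    obtain ⟨a, ha, hac⟩ := ih hc
    refine ⟨.app a ds, ⟨a, ha, ds, hds, rfl⟩, ?_⟩
    obtain ⟨_, -, _, -, rfl⟩ := ha
    rw [Hr, hac, Option.map_some]

theorem exists_iterate_HrO_eq_of_mem_Texp {m : ℕ} {M : Lam} {b : Rig} (hb : b ∈ Texp (H^[m] M)) :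
    ∃ a ∈ Texp M, HrO^[m] (some a) = some b := by
  induction m generalizing M with
  | zero => exact ⟨b, hb, rfl⟩
  | succ m ih =>
    obtain ⟨a', ha', hiter⟩ := ih (M := H M) hb
    obtain ⟨a, ha, hstep⟩ := exists_Hr_eq_of_mem_Texp_H ha'
    exact ⟨a, ha, by rw [Function.iterate_succ_apply, HrO, Option.bind_some, hstep, ← hiter]⟩

theorem exists_reflTransGen_of_mem_Texp_of_beta {M N : Lam} (h : Beta M N) {b : Rig}
    (hb : b ∈ Texp N) : ∃ a ∈ Texp M, ReflTransGen RStepO (some a) (some b) := by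
  induction h generalizing b with
  | beta P Q =>
    obtain ⟨a, ha, bs, hbs, -, hsub⟩ := Texp_subst_subset 0 P Q hb
    exact ⟨.app (.lam a) bs, ⟨.lam a, ⟨a, ha, rfl⟩, bs, hbs, rfl⟩,
      .single (.mk (hsub ▸ .beta a bs))⟩
  | lam _ ih =>
    obtain ⟨b, hb, rfl⟩ := hb
    obtain ⟨a, ha, hab⟩ := ih hb
    exact ⟨.lam a, ⟨a, ha, rfl⟩, reflTransGen_rStepO_map (fun _ _ => .lam) hab⟩
  | appL _ ih =>
    obtain ⟨c', hc', ds, hds, rfl⟩ := hb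
    obtain ⟨c, hc, hcc'⟩ := ih hc'
    exact ⟨.app c ds, ⟨c, hc, ds, hds, rfl⟩,
      reflTransGen_rStepO_map (fun _ _ h => .head ds h) hcc'⟩
  | appR _ ih =>
    obtain ⟨c, hc, ds, hds, rfl⟩ := hb
    have : Nonempty Rig := ⟨c⟩
    choose! f hf hsteps using fun d hd => ih (hds d hd)
    exact ⟨.app c (ds.map f), ⟨c, hc, _, List.forall_mem_map.2 hf, rfl⟩,
      reflTransGen_rStepO_app_args c []
        (List.forall₂_map_left_iff.2 (List.forall₂_same.2 hsteps))⟩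

theorem exists_reflTransGen_of_mem_Texp {M N : Lam} (h : ReflTransGen Beta M N) {b : Rig}
    (hb : b ∈ Texp N) : ∃ a ∈ Texp M, ReflTransGen RStepO (some a) (some b) := by
  induction h using ReflTransGen.head_induction_on with
  | refl => exact ⟨b, hb, .refl⟩
  | head h _ ih =>
    obtain ⟨a', ha', hsteps'⟩ := ih
    obtain ⟨a, ha, hsteps⟩ := exists_reflTransGen_of_mem_Texp_of_beta h ha'
    exact ⟨a, ha, hsteps.trans hsteps'⟩

theorem exists_mem_Texp_rNormal_of_neutral {M : Lam} (h : neutral M = true) :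
    ∃ b ∈ Texp M, rNeutral b = true ∧ RNormal (some b) := by
  induction M with
  | var n => exact ⟨.var n, rfl, rfl, rNormal_var n⟩
  | lam M => cases h
  | app P Q ih =>
    obtain ⟨c, hc, hneutral, hnormal⟩ := ih h
    exact ⟨.app c [], ⟨c, hc, [], List.forall_mem_nil _, rfl⟩, hneutral, hnormal.app_nil hneutral⟩

theorem exists_mem_Texp_rNormal_of_isHNF {M : Lam} (h : isHNF M) :
    ∃ b ∈ Texp M, RNormal (some b) := by
  induction M with
  | var n => exact ⟨.var n, rfl, rNormal_var n⟩
  | lam M ih =>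
    obtain ⟨b, hb, hnormal⟩ := ih h
    exact ⟨.lam b, ⟨b, hb, rfl⟩, hnormal.lam⟩
  | app P Q =>
    obtain ⟨b, hb, -, hnormal⟩ := exists_mem_Texp_rNormal_of_neutral (M := .app P Q) h
    exact ⟨b, hb, hnormal⟩

theorem exists_isHNF_iterate_H_of_mem_Texp {M : Lam} {a b : Rig} (ha : a ∈ Texp M)
    (hab : ReflTransGen RStepO (some a) (some b)) (hb : rIsHNF b) : ∃ m : ℕ, isHNF (H^[m] M) :=
  ((Approx.of_mem_Texp ha).reflTransGen_rStepO hab).exists_isHNF_iterate_H hb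

end Expansion

/-- the four characterizations of head normalization are equivalent. -/
theorem head_normalization_TFAE (M : Lam) :
    [(∃ a ∈ Texp M, ∃ b : Rig,
        Relation.ReflTransGen Rig.RStepO (some a) (some b) ∧ Rig.RNormal (some b)),
     (∃ a ∈ Texp M, ∃ m : ℕ, ∃ b : Rig,
        Rig.HrO^[m] (some a) = some b ∧ Rig.rIsHNF b),
     (∃ m : ℕ, Lam.isHNF (Lam.H^[m] M)),
     Lam.HeadNormalizable M].TFAE := by
  tfae_have 1 → 3 := fun ⟨_, ha, _, hab, hb⟩ =>
    exists_isHNF_iterate_H_of_mem_Texp ha hab (Rig.rIsHNF_of_rNormal hb)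
  tfae_have 2 → 3 := fun ⟨a, ha, m, _, hab, hb⟩ =>
    exists_isHNF_iterate_H_of_mem_Texp ha (hab ▸ Rig.reflTransGen_rStepO_iterate_HrO m (some a)) hb
  tfae_have 3 → 2 := by
    rintro ⟨m, hm⟩
    obtain ⟨b, hb, hnormal⟩ := exists_mem_Texp_rNormal_of_isHNF hm
    obtain ⟨a, ha, hab⟩ := exists_iterate_HrO_eq_of_mem_Texp hb
    exact ⟨a, ha, m, b, hab, Rig.rIsHNF_of_rNormal hnormal⟩
  tfae_have 3 → 4 := fun ⟨m, hm⟩ => ⟨_, Lam.beta_iterate_H m M, hm⟩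
  tfae_have 4 → 1 := by
    rintro ⟨N, hMN, hN⟩
    obtain ⟨b, hb, hnormal⟩ := exists_mem_Texp_rNormal_of_isHNF hN
    obtain ⟨a, ha, hab⟩ := exists_reflTransGen_of_mem_Texp hMN hb
    exact ⟨a, ha, b, hab, hnormal⟩
  tfae_finish
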